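/- Let k be the field with two elements and G = S_4 the symmetric group on four letters. Let M and N be finitely generated left kG-modules. If Ext_{kG}^m(M, N) ≠ 0 for some m > 0, then there exists an integer t with 0 ≤ t ≤ 5 and an integer m_0 such that Ext_{kG}^m(M, N) ≠ 0 for every m ≥ m_0 with m ≡ t (mod 6). -/

import Mathlib

open CategoryTheory

namespace S4Ext
set_option linter.unusedSectionVars false
open CategoryTheory.Limits Abelian

section Compare
variable {A : Type} [Ring A] [Algebra (ZMod 2) A]

theorem subsingleton_iff (M N : ModuleCat.{0} A) (m : ℕ) :
    Subsingleton (((_root_.Ext (ZMod 2) (ModuleCat.{0} A) (m + 1)).obj (Opposite.op M)).obj N) ↔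
      Subsingleton (Abelian.Ext.{0} M N (m + 1)) := by
  let P := projectiveResolution M
  have e := P.isoExt (R := ZMod 2) (m + 1) N
  have h1 : Subsingleton (((_root_.Ext (ZMod 2) (ModuleCat.{0} A) (m + 1)).obj
      (Opposite.op M)).obj N) ↔
      ((P.complex.linearYonedaObj (ZMod 2) N).ExactAt (m + 1)) := by
    rw [HomologicalComplex.exactAt_iff_isZero_homology, ← e.isZero_iff,
      ModuleCat.isZero_iff_subsingleton]
  rw [h1, HomologicalComplex.exactAt_iff' _ m (m + 1) (m + 2) (by simp) (by simp),
    ShortComplex.moduleCat_exact_iff]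
  constructor
  · intro h
    refine subsingleton_of_forall_eq 0 fun x => ?_
    obtain ⟨f, hf, rfl⟩ := P.extMk_surjective x (m + 2) rfl
    rw [P.extMk_eq_zero_iff f (m + 2) rfl hf m rfl]
    exact h f hf
  · intro h f hf
    exact (P.extMk_eq_zero_iff f (m + 2) rfl hf m rfl).1 (Subsingleton.elim _ _)
end Compare

section Abstract
universe w v u
variable {C : Type u} [Category.{v} C] [Abelian C] [HasExt.{w} C] (N : C)

/-- Vanishing of positive Ext into `N`. -/
def Acyclic (X : C) : Prop := ∀ d : ℕ, 1 ≤ d → Subsingleton (Ext.{w} X N d)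

/-- Every residue class mod 6 contains arbitrarily large degrees of vanishing. -/
def Sparse (X : C) : Prop := ∀ d : ℕ, 1 ≤ d → ∃ j : ℕ, Subsingleton (Ext.{w} X N (d + 6 * j))

variable {N}

theorem Acyclic.of_projective {X : C} [Projective X] : Acyclic.{w} N X := by
  rintro (_ | d) hd
  · omega
  · exact Ext.subsingleton_of_projective X N d

theorem delta_inj {S : ShortComplex C} (hS : S.ShortExact) (d : ℕ)
    (h : Subsingleton (Ext.{w} S.X₂ N d)) (x : Ext.{w} S.X₁ N d) {d' : ℕ} (hd : 1 + d = d')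
    (hx : hS.extClass.comp x hd = 0) : x = 0 := by
  obtain ⟨y, rfl⟩ := Ext.contravariant_sequence_exact₁ hS N x hd hx
  rw [Subsingleton.elim y 0, Ext.comp_zero]

theorem sub_left {S : ShortComplex C} (hS : S.ShortExact) (d : ℕ)
    (h : Subsingleton (Ext.{w} S.X₂ N d)) (h3 : Subsingleton (Ext.{w} S.X₃ N (d + 1))) :
    Subsingleton (Ext.{w} S.X₁ N d) :=
  subsingleton_of_forall_eq 0 fun x =>
    delta_inj hS d h x (add_comm 1 d) (Subsingleton.elim _ _)

theorem sub_right {S : ShortComplex C} (hS : S.ShortExact) (d : ℕ)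
    (h : Subsingleton (Ext.{w} S.X₂ N (d + 1))) (h1 : Subsingleton (Ext.{w} S.X₁ N d)) :
    Subsingleton (Ext.{w} S.X₃ N (d + 1)) :=
  subsingleton_of_forall_eq 0 fun x => by
    obtain ⟨y, rfl⟩ := Ext.contravariant_sequence_exact₃ hS N x (Subsingleton.elim _ _)
      (add_comm 1 d)
    rw [Subsingleton.elim y 0, Ext.comp_zero]

theorem sub_mid {S : ShortComplex C} (hS : S.ShortExact) (d : ℕ)
    (h1 : Subsingleton (Ext.{w} S.X₁ N d)) (h3 : Subsingleton (Ext.{w} S.X₃ N d)) :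
    Subsingleton (Ext.{w} S.X₂ N d) :=
  subsingleton_of_forall_eq 0 fun x => by
    obtain ⟨y, rfl⟩ := Ext.contravariant_sequence_exact₂ hS N x (Subsingleton.elim _ _)
    rw [Subsingleton.elim y 0, Ext.comp_zero]

theorem Sparse.left {S : ShortComplex C} (hS : S.ShortExact) (h2 : Acyclic.{w} N S.X₂)
    (h3 : Sparse.{w} N S.X₃) : Sparse.{w} N S.X₁ := by
  intro d hd
  obtain ⟨j, hj⟩ := h3 (d + 1) (by omega)
  refine ⟨j, sub_left hS _ (h2 _ (by omega)) ?_⟩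
  rwa [show d + 6 * j + 1 = d + 1 + 6 * j by ring]

theorem Sparse.right {S : ShortComplex C} (hS : S.ShortExact) (h2 : Acyclic.{w} N S.X₂)
    (h1 : Sparse.{w} N S.X₁) : Sparse.{w} N S.X₃ := by
  intro d hd
  obtain ⟨j, hj⟩ := h1 (d + 5) (by omega)
  refine ⟨j + 1, ?_⟩
  rw [show d + 6 * (j + 1) = d + 5 + 6 * j + 1 by ring]
  exact sub_right hS _ (h2 _ (by omega)) hj

/-- If vanishing in degree `d + n` implies vanishing in degree `d`, with `n ∣ 6`,
a sparse object is acyclic. -/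
theorem Sparse.acyclic {X : C} (h : Sparse.{w} N X) (n a : ℕ) (hn : n * a = 6)
    (hs : ∀ d, 1 ≤ d → Subsingleton (Ext.{w} X N (d + n)) → Subsingleton (Ext.{w} X N d)) :
    Acyclic.{w} N X := by
  intro d hd
  have key : ∀ b d, 1 ≤ d → Subsingleton (Ext.{w} X N (d + n * b)) →
      Subsingleton (Ext.{w} X N d) := by
    intro b
    induction b with
    | zero => intro d _ h; simpa using h
    | succ b ih =>
      intro d hd h
      refine hs d hd (ih _ (by omega) ?_)
      rwa [show d + n + n * b = d + n * (b + 1) by ring]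
  obtain ⟨j, hj⟩ := h d hd
  refine key (a * j) d hd ?_
  rwa [← mul_assoc, hn]

/-- Nilpotence of the action of a degree 2 class on an Ext class. -/
inductive Nilp {X : C} (z : Ext.{w} X X 2) : ∀ {d : ℕ}, Ext.{w} X N d → Prop
  | zero (d : ℕ) : Nilp z (0 : Ext.{w} X N d)
  | step {d : ℕ} (x : Ext.{w} X N d) : Nilp z (z.comp x (rfl : 2 + d = 2 + d)) → Nilp z x

theorem Nilp.of_subsingleton {X : C} (z : Ext.{w} X X 2) (n : ℕ) : ∀ (d m : ℕ), d + 2 * n = m →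
    Subsingleton (Ext.{w} X N m) → ∀ x : Ext.{w} X N d, Nilp z x := by
  induction n with
  | zero =>
    rintro d m rfl h x
    have h' : Subsingleton (Ext.{w} X N d) := h
    rw [Subsingleton.elim x 0]
    exact Nilp.zero d
  | succ n ih =>
    rintro d m rfl h x
    exact Nilp.step x (ih (2 + d) _ (by ring) h _)

theorem Sparse.nilp {X : C} (h : Sparse.{w} N X) (z : Ext.{w} X X 2) {d : ℕ} (hd : 1 ≤ d)
    (x : Ext.{w} X N d) : Nilp z x := by
  obtain ⟨j, hj⟩ := h d hd
  exact Nilp.of_subsingleton z (3 * j) d _ (by ring) hj x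

theorem Nilp.map {X Y : C} {zX : Ext.{w} X X 2} {zY : Ext.{w} Y Y 2} (f : X ⟶ Y)
    (hf : zX.comp (Ext.mk₀ f) (add_zero 2) = (Ext.mk₀ f).comp zY (zero_add 2))
    {d : ℕ} {y : Ext.{w} Y N d} (hy : Nilp zY y) :
    Nilp zX ((Ext.mk₀ f).comp y (zero_add d)) := by
  induction hy with
  | zero d => rw [Ext.comp_zero]; exact Nilp.zero d
  | step y _ ih =>
    refine Nilp.step _ ?_
    rw [← Ext.comp_assoc_of_second_deg_zero, hf, Ext.comp_assoc _ _ _ (zero_add 2) rfl (by omega)]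
    exact ih

theorem Nilp.ext {S : ShortComplex C} (hS : S.ShortExact)
    {z₁ : Ext.{w} S.X₁ S.X₁ 2} {z₂ : Ext.{w} S.X₂ S.X₂ 2} {z₃ : Ext.{w} S.X₃ S.X₃ 2}
    (hf : z₁.comp (Ext.mk₀ S.f) (add_zero 2) = (Ext.mk₀ S.f).comp z₂ (zero_add 2))
    (hg : z₂.comp (Ext.mk₀ S.g) (add_zero 2) = (Ext.mk₀ S.g).comp z₃ (zero_add 2))
    (h₁ : ∀ {d : ℕ}, 1 ≤ d → ∀ x : Ext.{w} S.X₁ N d, Nilp z₁ x)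
    (h₃ : ∀ {d : ℕ}, 1 ≤ d → ∀ x : Ext.{w} S.X₃ N d, Nilp z₃ x)
    {d : ℕ} (hd : 1 ≤ d) (x : Ext.{w} S.X₂ N d) : Nilp z₂ x := by
  have key : ∀ {d : ℕ} (y : Ext.{w} S.X₁ N d), Nilp z₁ y → 1 ≤ d → ∀ x : Ext.{w} S.X₂ N d,
      (Ext.mk₀ S.f).comp x (zero_add d) = y → Nilp z₂ x := by
    intro d y hy
    induction hy with
    | zero d =>
      intro hd x hx
      obtain ⟨t, rfl⟩ := Ext.contravariant_sequence_exact₂ hS N x hx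
      exact Nilp.map S.g hg (h₃ hd t)
    | step y _ ih =>
      rintro hd x rfl
      refine Nilp.step _ (ih (by omega) _ ?_)
      rw [← Ext.comp_assoc_of_second_deg_zero, hf, Ext.comp_assoc _ _ _ (zero_add 2) rfl (by omega)]
  exact key _ (h₁ hd _) hd x rfl

theorem Nilp.eq_zero {X : C} {z : Ext.{w} X X 2}
    (hz : ∀ {d : ℕ}, 1 ≤ d → ∀ x : Ext.{w} X N d, z.comp x (rfl : 2 + d = 2 + d) = 0 → x = 0)
    {d : ℕ} {x : Ext.{w} X N d} (hx : Nilp z x) (hd : 1 ≤ d) : x = 0 := by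
  induction hx with
  | zero d => rfl
  | step x _ ih => exact hz hd x (ih (by omega))

theorem ses_kernel {A B : C} (f : A ⟶ B) [Epi f] :
    (ShortComplex.mk (kernel.ι f) f (kernel.condition f)).ShortExact :=
  { exact := ShortComplex.exact_of_f_is_kernel _ (kernelIsKernel f) }

theorem ses_lift {A B D E : C} (f : A ⟶ B) (g : B ⟶ D) (h : D ⟶ E) (w : f ≫ g = 0)
    (w' : g ≫ h = 0) [Mono f] (e : (ShortComplex.mk f g w).Exact)
    (e' : (ShortComplex.mk g h w').Exact) :
    (ShortComplex.mk f (kernel.lift h g w')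
      (by rw [← cancel_mono (kernel.ι h)]; simp [w])).ShortExact := by
  have : Epi (kernel.lift h g w') := (ShortComplex.exact_iff_epi_kernel_lift _).1 e'
  refine { exact := ?_ }
  let φ : ShortComplex.mk f (kernel.lift h g w')
      (by rw [← cancel_mono (kernel.ι h)]; simp [w]) ⟶ ShortComplex.mk f g w :=
    { τ₁ := 𝟙 _, τ₂ := 𝟙 _, τ₃ := kernel.ι h }
  exact (ShortComplex.exact_iff_of_epi_of_isIso_of_mono φ).2 e

/-- A natural exact sequence `0 ⟶ Z ⟶ FA Z ⟶ FB Z ⟶ Z ⟶ 0`. -/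
structure TwoExt (FA FB : C ⥤ C) where
  η : 𝟭 C ⟶ FA
  α : FA ⟶ FB
  ε : FB ⟶ 𝟭 C
  w : ∀ Z, η.app Z ≫ α.app Z = 0
  w' : ∀ Z, α.app Z ≫ ε.app Z = 0
  mono : ∀ Z, Mono (η.app Z)
  epi : ∀ Z, Epi (ε.app Z)
  ex : ∀ Z, (ShortComplex.mk _ _ (w Z)).Exact
  ex' : ∀ Z, (ShortComplex.mk _ _ (w' Z)).Exact

namespace TwoExt
variable {FA FB : C ⥤ C} (D : TwoExt FA FB)
attribute [instance] TwoExt.mono TwoExt.epi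

theorem ses₁ (Z : C) : (ShortComplex.mk (kernel.ι (D.ε.app Z)) (D.ε.app Z)
    (kernel.condition _)).ShortExact := ses_kernel _

theorem ses₂ (Z : C) : (ShortComplex.mk (D.η.app Z) (kernel.lift (D.ε.app Z) (D.α.app Z) (D.w' Z))
      (by rw [← cancel_mono (kernel.ι _)]; simp [D.w])).ShortExact :=
  ses_lift _ _ _ (D.w Z) (D.w' Z) (D.ex Z) (D.ex' Z)

/-- The Yoneda class of the two-fold extension. -/
noncomputable def zeta (Z : C) : Ext.{w} Z Z 2 :=
  (D.ses₁ Z).extClass.comp (D.ses₂ Z).extClass (rfl : 1 + 1 = 2)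

theorem zeta_nat {Z W : C} (f : Z ⟶ W) :
    (D.zeta Z).comp (Ext.mk₀ f) (add_zero 2) = (Ext.mk₀ f).comp (D.zeta W) (zero_add 2) := by
  let κ : kernel (D.ε.app Z) ⟶ kernel (D.ε.app W) :=
    kernel.map _ _ (FB.map f) f (by simpa using (D.ε.naturality f).symm)
  have n₁ := ShortComplex.ShortExact.extClass_naturality (D.ses₁ Z) (D.ses₁ W)
    { τ₁ := κ, τ₂ := FB.map f, τ₃ := f,
      comm₁₂ := by simp [κ]
      comm₂₃ := by simpa using (D.ε.naturality f) }
  have n₂ := ShortComplex.ShortExact.extClass_naturality (D.ses₂ Z) (D.ses₂ W)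
    { τ₁ := f, τ₂ := FA.map f, τ₃ := κ,
      comm₁₂ := by simpa using (D.η.naturality f)
      comm₂₃ := by
        dsimp
        rw [← cancel_mono (kernel.ι _)]
        simp [κ] }
  dsimp at n₁ n₂
  unfold zeta
  rw [Ext.comp_assoc_of_third_deg_zero, n₂, ← Ext.comp_assoc_of_second_deg_zero, n₁,
    Ext.comp_assoc _ _ _ (zero_add 1) rfl (by omega)]

theorem zeta_inj {Z : C} (hA : Acyclic.{w} N (FA.obj Z)) (hB : Acyclic.{w} N (FB.obj Z))
    {d : ℕ} (hd : 1 ≤ d) (x : Ext.{w} Z N d)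
    (hx : (D.zeta Z).comp x (rfl : 2 + d = 2 + d) = 0) : x = 0 := by
  unfold zeta at hx
  rw [Ext.comp_assoc _ _ _ _ (rfl : 1 + d = 1 + d) (by omega)] at hx
  have h1 := delta_inj (D.ses₁ Z) (1 + d) (hB _ (by omega)) _ (by omega) hx
  exact delta_inj (D.ses₂ Z) d (hA _ hd) x rfl h1

end TwoExt

theorem main_abs {FA FB : C ⥤ C} (D : TwoExt FA FB) {M X P₂ P₁ P₀ : C}
    (i : M ⟶ X) (p : X ⟶ M) (wip : i ≫ p = 0) (hS : (ShortComplex.mk i p wip).ShortExact)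
    (η : X ⟶ P₂) (d₂ : P₂ ⟶ P₁) (d₁ : P₁ ⟶ P₀) (ε : P₀ ⟶ X) [Mono η] [Epi ε]
    (w₁ : η ≫ d₂ = 0) (w₂ : d₂ ≫ d₁ = 0) (w₃ : d₁ ≫ ε = 0)
    (e₁ : (ShortComplex.mk _ _ w₁).Exact) (e₂ : (ShortComplex.mk _ _ w₂).Exact)
    (e₃ : (ShortComplex.mk _ _ w₃).Exact)
    (h₀ : Acyclic.{w} N P₀) (h₂ : Acyclic.{w} N P₂)
    (hA : Acyclic.{w} N (FA.obj P₁)) (hB : Acyclic.{w} N (FB.obj P₁))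
    (hM : Sparse.{w} N M) : Acyclic.{w} N M := by
  have hX : Sparse.{w} N X := by
    intro d hd
    obtain ⟨j, hj⟩ := hM d hd
    exact ⟨j, sub_mid hS _ hj hj⟩
  have s₁ := ses_kernel ε
  have s₂ := ses_lift (kernel.ι d₁) d₁ ε (kernel.condition _) w₃
    (ShortComplex.exact_of_f_is_kernel _ (kernelIsKernel d₁)) e₃
  have s₃ := ses_lift η d₂ d₁ w₁ w₂ e₁ e₂
  have hK₁ : Sparse.{w} N (kernel ε) := Sparse.left s₁ h₀ hX
  have hK₂ : Sparse.{w} N (kernel d₁) := Sparse.right s₃ h₂ hX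
  have h₁ : Acyclic.{w} N P₁ := by
    intro d hd
    refine subsingleton_of_forall_eq 0 fun x => ?_
    have hx : Nilp (D.zeta P₁) x := Nilp.ext s₂ (z₁ := D.zeta _) (z₃ := D.zeta _)
      (D.zeta_nat _) (D.zeta_nat _) (fun hd x => hK₂.nilp _ hd x) (fun hd x => hK₁.nilp _ hd x)
      hd x
    exact hx.eq_zero (fun hd x h => D.zeta_inj hA hB hd x h) hd
  have aX : Acyclic.{w} N X := by
    refine hX.acyclic 3 2 rfl fun d hd h => ?_
    exact sub_left s₃ d (h₂ _ hd) (sub_left s₂ _ (h₁ _ (by omega))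
      (sub_left s₁ _ (h₀ _ (by omega)) h))
  refine hM.acyclic 1 6 rfl fun d hd h => ?_
  exact sub_left hS d (aX _ hd) h

end Abstract

noncomputable section Tw
set_option linter.unusedSectionVars false
open MonoidAlgebra

variable {G : Type} [Group G]

/-- Group algebra over the field with two elements. -/
abbrev GA (G : Type) [Group G] := MonoidAlgebra (ZMod 2) G

variable {n m l : Type} [Fintype n] [Fintype m] [Fintype l]
variable {X Y : Type} [AddCommGroup X] [Module (GA G) X] [AddCommGroup Y] [Module (GA G) Y]

/-- A matrix over the group algebra acting on tuples of module elements. -/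
def act (X : Type) [AddCommGroup X] [Module (GA G) X] (A : Matrix m n (GA G)) :
    (n → X) →+ (m → X) where
  toFun f i := ∑ j, A i j • f j
  map_zero' := by ext; simp
  map_add' f g := by ext; simp [Finset.sum_add_distrib]

theorem act_apply (A : Matrix m n (GA G)) (f : n → X) (i : m) :
    act X A f i = ∑ j, A i j • f j := rfl

theorem act_mul (A : Matrix l m (GA G)) (B : Matrix m n (GA G)) (f : n → X) :
    act X (A * B) f = act X A (act X B f) := by
  ext i
  simp only [act_apply, Matrix.mul_apply, Finset.sum_smul, Finset.smul_sum, mul_smul]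
  exact Finset.sum_comm

theorem act_add (A B : Matrix m n (GA G)) (f : n → X) :
    act X (A + B) f = act X A f + act X B f := by
  ext i
  simp [act_apply, add_smul, Finset.sum_add_distrib]

theorem act_zero (f : n → X) : act X (0 : Matrix m n (GA G)) f = 0 := by
  ext i; simp [act_apply]

theorem act_one [DecidableEq n] (f : n → X) : act X (1 : Matrix n n (GA G)) f = f := by
  ext i; simp [act_apply, Matrix.one_apply, ite_smul]

theorem act_map (h : X →ₗ[GA G] Y) (A : Matrix m n (GA G)) (f : n → X) :
    act Y A (fun j => h (f j)) = fun i => h (act X A f i) := by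
  ext i; simp [act_apply]

/-- Scalar matrices. -/
def K (G : Type) [Group G] (A : Matrix m n (ZMod 2)) : Matrix m n (GA G) :=
  A.map (algebraMap (ZMod 2) (GA G))

theorem K_mul (A : Matrix l m (ZMod 2)) (B : Matrix m n (ZMod 2)) :
    K G (A * B) = K G A * K G B := Matrix.map_mul

theorem K_add (A B : Matrix m n (ZMod 2)) : K G (A + B) = K G A + K G B := by
  ext i j; simp [K]

theorem K_zero : K G (0 : Matrix m n (ZMod 2)) = 0 := by
  ext i j; simp [K]

theorem K_one [DecidableEq n] : K G (1 : Matrix n n (ZMod 2)) = 1 := by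
  exact Matrix.map_one _ (map_zero _) (map_one _)

/-- Pointwise additive maps commute with scalar matrices. -/
theorem act_K_map (h : X →+ Y) (A : Matrix m n (ZMod 2)) (f : n → X) :
    act Y (K G A) (fun j => h (f j)) = fun i => h (act X (K G A) f i) := by
  ext i
  simp only [act_apply, map_sum]
  refine Finset.sum_congr rfl fun j _ => ?_
  have : ∀ c : ZMod 2, c = 0 ∨ c = 1 := by decide
  rcases this (A i j) with h | h <;> simp only [K, h, Matrix.map_apply, map_zero, map_one, zero_smul, one_smul]

theorem map_smul_of (F : X →+ Y) (hF : ∀ (g : G) x, F (of (ZMod 2) G g • x) = of (ZMod 2) G g • F x)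
    (r : GA G) (x : X) : F (r • x) = r • F x := by
  induction r using MonoidAlgebra.induction_on with
  | of g => exact hF g x
  | add a b ha hb => simp [add_smul, ha, hb]
  | smul c a ha =>
    have : ∀ c : ZMod 2, c = 0 ∨ c = 1 := by decide
    rcases this c with h | h <;> simp [h, ha]

/-- An additive equivariant map is linear. -/
def mkLin (F : X →+ Y) (hF : ∀ (g : G) x, F (of (ZMod 2) G g • x) = of (ZMod 2) G g • F x) :
    X →ₗ[GA G] Y where
  toFun := F
  map_add' := F.map_add
  map_smul' := map_smul_of F hF

variable [DecidableEq n] [DecidableEq m]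

/-- The twisted diagonal matrix homomorphism. -/
def Phi (ρ : G →* Matrix n n (ZMod 2)) : GA G →ₐ[ZMod 2] Matrix n n (GA G) :=
  MonoidAlgebra.lift (ZMod 2) (Matrix n n (GA G)) G
    { toFun g := Matrix.of fun i j => MonoidAlgebra.single g (ρ g i j)
      map_one' := by
        ext1 i j
        by_cases h : i = j <;> simp [Matrix.one_apply, h, MonoidAlgebra.one_def]
      map_mul' g h := by
        ext1 i j
        simp only [Matrix.of_apply, map_mul, Matrix.mul_apply, MonoidAlgebra.single_mul_single]
        exact map_sum (MonoidAlgebra.singleAddHom (g * h)) _ _ }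

theorem Phi_of (ρ : G →* Matrix n n (ZMod 2)) (g : G) :
    Phi ρ (of (ZMod 2) G g) = Matrix.of fun i j => MonoidAlgebra.single g (ρ g i j) := by
  simp [Phi]

/-- The diagonal tensor product of a matrix representation with a module. -/
def Tw (_ρ : G →* Matrix n n (ZMod 2)) (X : Type) : Type := n → X

instance (ρ : G →* Matrix n n (ZMod 2)) : AddCommGroup (Tw ρ X) :=
  inferInstanceAs (AddCommGroup (n → X))

/-- Underlying tuple. -/
def e (ρ : G →* Matrix n n (ZMod 2)) (X : Type) [AddCommGroup X] : Tw ρ X ≃+ (n → X) :=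
  AddEquiv.refl (n → X)

instance (ρ : G →* Matrix n n (ZMod 2)) : Module (GA G) (Tw ρ X) where
  smul r f := (e ρ X).symm (act X (Phi ρ r) (e ρ X f))
  one_smul f := by
    change (e ρ X).symm (act X (Phi ρ 1) (e ρ X f)) = f
    rw [map_one, act_one, AddEquiv.symm_apply_apply]
  mul_smul a b f := by
    change (e ρ X).symm (act X (Phi ρ (a * b)) (e ρ X f)) =
      (e ρ X).symm (act X (Phi ρ a) (e ρ X ((e ρ X).symm (act X (Phi ρ b) (e ρ X f)))))
    rw [map_mul, act_mul, AddEquiv.apply_symm_apply]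
  smul_zero a := by
    change (e ρ X).symm (act X (Phi ρ a) (e ρ X 0)) = 0
    simp
  smul_add a x y := by
    change (e ρ X).symm (act X (Phi ρ a) (e ρ X (x + y))) =
      (e ρ X).symm (act X (Phi ρ a) (e ρ X x)) + (e ρ X).symm (act X (Phi ρ a) (e ρ X y))
    simp
  add_smul a b f := by
    change (e ρ X).symm (act X (Phi ρ (a + b)) (e ρ X f)) =
      (e ρ X).symm (act X (Phi ρ a) (e ρ X f)) + (e ρ X).symm (act X (Phi ρ b) (e ρ X f))
    rw [map_add, act_add, map_add]
  zero_smul f := by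
    change (e ρ X).symm (act X (Phi ρ 0) (e ρ X f)) = 0
    rw [map_zero, act_zero, map_zero]

theorem Tw_smul (ρ : G →* Matrix n n (ZMod 2)) (r : GA G) (f : Tw ρ X) :
    e ρ X (r • f) = act X (Phi ρ r) (e ρ X f) := rfl

/-- Action of a group element as an additive map. -/
def gact (X : Type) [AddCommGroup X] [Module (GA G) X] (g : G) : X →+ X :=
  DistribSMul.toAddMonoidHom X (of (ZMod 2) G g)

theorem gact_apply (g : G) (x : X) : gact X g x = of (ZMod 2) G g • x := rfl

theorem Tw_gact (ρ : G →* Matrix n n (ZMod 2)) (g : G) (f : Tw ρ X) :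
    e ρ X (gact _ g f) = act X (K G (ρ g)) (fun j => gact X g (e ρ X f j)) := by
  rw [gact_apply, Tw_smul, Phi_of]
  ext i
  simp only [act_apply, gact_apply, ← mul_smul]
  refine Finset.sum_congr rfl fun j _ => ?_
  congr 1
  simp [K]

/-- Pointwise application of an additive map. -/
def pw (ρ : G →* Matrix n n (ZMod 2)) (h : X →+ Y) : Tw ρ X →+ Tw ρ Y :=
  (e ρ Y).symm.toAddMonoidHom.comp ((h.compLeft n).comp (e ρ X).toAddMonoidHom)

theorem e_pw (ρ : G →* Matrix n n (ZMod 2)) (h : X →+ Y) (f : Tw ρ X) :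
    e ρ Y (pw ρ h f) = fun j => h (e ρ X f j) := rfl

/-- Functoriality in the module. -/
def TwMap (ρ : G →* Matrix n n (ZMod 2)) (h : X →ₗ[GA G] Y) : Tw ρ X →ₗ[GA G] Tw ρ Y :=
  { pw ρ h.toAddMonoidHom with
    map_smul' := fun r f => (e ρ Y).injective <| by
      rw [RingHom.id_apply, Tw_smul]
      change (fun j => h (e ρ X (r • f) j)) = act Y (Phi ρ r) (fun j => h (e ρ X f j))
      rw [act_map, Tw_smul] }

theorem e_TwMap (ρ : G →* Matrix n n (ZMod 2)) (h : X →ₗ[GA G] Y) (f : Tw ρ X) :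
    e ρ Y (TwMap ρ h f) = fun j => h (e ρ X f j) := rfl

/-- Functor version. -/
@[simps]
def T (ρ : G →* Matrix n n (ZMod 2)) : ModuleCat.{0} (GA G) ⥤ ModuleCat.{0} (GA G) where
  obj X := ModuleCat.of (GA G) (Tw ρ X)
  map f := ModuleCat.ofHom (TwMap ρ f.hom)
  map_id X := by ext; rfl
  map_comp f g := by ext; rfl

/-- Change of matrix representation. -/
def chg {ρ : G →* Matrix n n (ZMod 2)} {σ : G →* Matrix m m (ZMod 2)} (A : Matrix m n (ZMod 2))
    (hA : ∀ g, σ g * A = A * ρ g) (X : Type) [AddCommGroup X] [Module (GA G) X] :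
    Tw ρ X →ₗ[GA G] Tw σ X :=
  mkLin ((e σ X).symm.toAddMonoidHom.comp ((act X (K G A)).comp (e ρ X).toAddMonoidHom))
    fun g x => (e σ X).injective <| by
      rw [← gact_apply, ← gact_apply, Tw_gact]
      change act X (K G A) (e ρ X (gact _ g x)) = _
      rw [Tw_gact, ← act_mul, ← K_mul, ← hA, K_mul, act_mul, act_K_map]
      rfl

theorem e_chg {ρ : G →* Matrix n n (ZMod 2)} {σ : G →* Matrix m m (ZMod 2)}
    (A : Matrix m n (ZMod 2)) (hA : ∀ g, σ g * A = A * ρ g) (x : Tw ρ X) :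
    e σ X (chg A hA X x) = act X (K G A) (e ρ X x) := rfl

/-- Map from a module to its twist. -/
def col {ρ : G →* Matrix n n (ZMod 2)} (A : Matrix n Unit (ZMod 2))
    (hA : ∀ g, ρ g * A = A) (X : Type) [AddCommGroup X] [Module (GA G) X] :
    X →ₗ[GA G] Tw ρ X :=
  mkLin ((e ρ X).symm.toAddMonoidHom.comp ((act X (K G A)).comp (Pi.constAddMonoidHom Unit X)))
    fun g x => (e ρ X).injective <| by
      rw [← gact_apply, ← gact_apply, Tw_gact]
      change act X (K G A) (fun _ => gact X g x) = act X (K G (ρ g))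
        (fun j => gact X g (act X (K G A) (fun _ => x) j))
      conv_lhs => rw [← hA g, K_mul, act_mul]
      rw [act_K_map]

theorem e_col {ρ : G →* Matrix n n (ZMod 2)} (A : Matrix n Unit (ZMod 2))
    (hA : ∀ g, ρ g * A = A) (x : X) :
    e ρ X (col A hA X x) = act X (K G A) (fun _ => x) := rfl

/-- Map from a twist to the module. -/
def row {ρ : G →* Matrix n n (ZMod 2)} (A : Matrix Unit n (ZMod 2))
    (hA : ∀ g, A * ρ g = A) (X : Type) [AddCommGroup X] [Module (GA G) X] :
    Tw ρ X →ₗ[GA G] X :=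
  mkLin ((Pi.evalAddMonoidHom (fun _ : Unit => X) ()).comp
    ((act X (K G A)).comp (e ρ X).toAddMonoidHom)) fun g x => by
      rw [← gact_apply, ← gact_apply]
      change act X (K G A) (e ρ X (gact _ g x)) () =
        gact X g (act X (K G A) (e ρ X x) ())
      rw [Tw_gact, ← act_mul, ← K_mul, hA, act_K_map]

theorem row_apply {ρ : G →* Matrix n n (ZMod 2)} (A : Matrix Unit n (ZMod 2))
    (hA : ∀ g, A * ρ g = A) (x : Tw ρ X) :
    row A hA X x = act X (K G A) (e ρ X x) () := rfl

/-! Exactness -/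
section exactness
variable {ρ : G →* Matrix n n (ZMod 2)} {σ : G →* Matrix m m (ZMod 2)}
variable [DecidableEq l] {τ : G →* Matrix l l (ZMod 2)}

theorem chg_chg {A : Matrix m n (ZMod 2)} {hA : ∀ g, σ g * A = A * ρ g}
    {B : Matrix l m (ZMod 2)} {hB : ∀ g, τ g * B = B * σ g} (h : B * A = 0) (x : Tw ρ X) :
    chg B hB X (chg A hA X x) = 0 := by
  apply (e τ X).injective
  rw [e_chg, e_chg, ← act_mul, ← K_mul, h, K_zero, act_zero, map_zero]

theorem chg_col {A : Matrix n Unit (ZMod 2)} {hA : ∀ g, ρ g * A = A}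
    {B : Matrix m n (ZMod 2)} {hB : ∀ g, σ g * B = B * ρ g} (h : B * A = 0) (x : X) :
    chg B hB X (col A hA X x) = 0 := by
  apply (e σ X).injective
  rw [e_chg, e_col, ← act_mul, ← K_mul, h, K_zero, act_zero, map_zero]

theorem row_chg {A : Matrix m n (ZMod 2)} {hA : ∀ g, σ g * A = A * ρ g}
    {B : Matrix Unit m (ZMod 2)} {hB : ∀ g, B * σ g = B} (h : B * A = 0) (x : Tw ρ X) :
    row B hB X (chg A hA X x) = 0 := by
  rw [row_apply, e_chg, ← act_mul, ← K_mul, h, K_zero, act_zero, Pi.zero_apply]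

theorem row_col {A : Matrix n Unit (ZMod 2)} {hA : ∀ g, ρ g * A = A}
    {B : Matrix Unit n (ZMod 2)} {hB : ∀ g, B * ρ g = B} (h : B * A = 0) (x : X) :
    row B hB X (col A hA X x) = 0 := by
  rw [row_apply, e_col, ← act_mul, ← K_mul, h, K_zero, act_zero, Pi.zero_apply]

theorem col_inj {A : Matrix n Unit (ZMod 2)} {hA : ∀ g, ρ g * A = A}
    (S : Matrix Unit n (ZMod 2)) (h : S * A = 1) : Function.Injective (col A hA X) := by
  intro x y hxy
  have h1 := congrArg (fun z => act X (K G S) (e ρ X z) ()) hxy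
  simpa only [e_col, ← act_mul, ← K_mul, h, K_one, act_one] using h1

theorem row_surj {B : Matrix Unit n (ZMod 2)} {hB : ∀ g, B * ρ g = B}
    (S : Matrix n Unit (ZMod 2)) (h : B * S = 1) : Function.Surjective (row B hB X) := by
  intro x
  refine ⟨(e ρ X).symm (act X (K G S) (fun _ => x)), ?_⟩
  rw [row_apply, AddEquiv.apply_symm_apply, ← act_mul, ← K_mul, h, K_one, act_one]

theorem split_eq {A : Matrix m n (ZMod 2)} {B : Matrix l m (ZMod 2)} {S : Matrix n m (ZMod 2)}
    {U : Matrix m l (ZMod 2)} (h : A * S + U * B = 1) (y : m → X) (hy : act X (K G B) y = 0) :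
    act X (K G A) (act X (K G S) y) = y := by
  have := act_one (G := G) y
  rw [← K_one, ← h, K_add, act_add, K_mul, K_mul, act_mul, act_mul, hy, map_zero, add_zero] at this
  exact this

theorem chg_chg_ex {A : Matrix m n (ZMod 2)} {hA : ∀ g, σ g * A = A * ρ g}
    {B : Matrix l m (ZMod 2)} {hB : ∀ g, τ g * B = B * σ g} (S : Matrix n m (ZMod 2))
    (U : Matrix m l (ZMod 2)) (h : A * S + U * B = 1) (y : Tw σ X)
    (hy : chg B hB X y = 0) : ∃ x, chg A hA X x = y := by
  refine ⟨(e ρ X).symm (act X (K G S) (e σ X y)), (e σ X).injective ?_⟩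
  rw [e_chg, AddEquiv.apply_symm_apply]
  refine split_eq h _ ?_
  rw [← e_chg B hB, hy, map_zero]

theorem row_chg_ex {A : Matrix m n (ZMod 2)} {hA : ∀ g, σ g * A = A * ρ g}
    {B : Matrix Unit m (ZMod 2)} {hB : ∀ g, B * σ g = B} (S : Matrix n m (ZMod 2))
    (U : Matrix m Unit (ZMod 2)) (h : A * S + U * B = 1) (y : Tw σ X)
    (hy : row B hB X y = 0) : ∃ x, chg A hA X x = y := by
  refine ⟨(e ρ X).symm (act X (K G S) (e σ X y)), (e σ X).injective ?_⟩
  rw [e_chg, AddEquiv.apply_symm_apply]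
  exact split_eq h _ (funext fun _ => hy)

theorem chg_col_ex {A : Matrix n Unit (ZMod 2)} {hA : ∀ g, ρ g * A = A}
    {B : Matrix m n (ZMod 2)} {hB : ∀ g, σ g * B = B * ρ g} (S : Matrix Unit n (ZMod 2))
    (U : Matrix n m (ZMod 2)) (h : A * S + U * B = 1) (y : Tw ρ X)
    (hy : chg B hB X y = 0) : ∃ x, col A hA X x = y := by
  refine ⟨act X (K G S) (e ρ X y) (), (e ρ X).injective ?_⟩
  rw [e_col]
  refine split_eq h _ ?_
  rw [← e_chg B hB, hy, map_zero]

theorem row_col_ex {A : Matrix n Unit (ZMod 2)} {hA : ∀ g, ρ g * A = A}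
    {B : Matrix Unit n (ZMod 2)} {hB : ∀ g, B * ρ g = B} (S : Matrix Unit n (ZMod 2))
    (U : Matrix n Unit (ZMod 2)) (h : A * S + U * B = 1) (y : Tw ρ X)
    (hy : row B hB X y = 0) : ∃ x, col A hA X x = y := by
  refine ⟨act X (K G S) (e ρ X y) (), (e ρ X).injective ?_⟩
  rw [e_col]
  exact split_eq h _ (funext fun _ => hy)

end exactness

/-! Projectivity -/

theorem gact_mul (a b : G) (x : X) : gact X (a * b) x = gact X a (gact X b x) := by
  rw [gact_apply, gact_apply, gact_apply, ← mul_smul, map_mul]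

theorem gact_one (x : X) : gact X (1 : G) x = x := by
  rw [gact_apply, map_one, one_smul]

theorem projective_of_avg [Fintype G] (ψ : X →+ X)
    (h : ∀ x, ∑ g : G, gact X g (ψ (gact X g⁻¹ x)) = x) : Module.Projective (GA G) X := by
  let F : (X →₀ GA G) →ₗ[GA G] X := Finsupp.linearCombination (GA G) id
  have hF : Function.Surjective F := fun x => ⟨Finsupp.single x 1, by simp [F]⟩
  let _i : Module (ZMod 2) X := Module.compHom X (algebraMap (ZMod 2) (GA G))
  obtain ⟨s, hs⟩ : ∃ s : X →+ (X →₀ GA G), ∀ x, F (s x) = x := by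
    obtain ⟨s, hs⟩ := LinearMap.exists_rightInverse_of_surjective
      (F.toAddMonoidHom.toZModLinearMap 2) (LinearMap.range_eq_top.2 hF)
    exact ⟨s.toAddMonoidHom, fun x => LinearMap.congr_fun hs x⟩
  let H : X →+ (X →₀ GA G) := ∑ g : G, (gact _ g).comp (s.comp (ψ.comp (gact X g⁻¹)))
  have hH : ∀ x, H x = ∑ g : G, gact _ g (s (ψ (gact X g⁻¹ x))) := fun x => by
    simp [H]
  have hHg : ∀ (a : G) x, H (of (ZMod 2) G a • x) = of (ZMod 2) G a • H x := fun a x => by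
    rw [← gact_apply, ← gact_apply, hH, hH, map_sum]
    refine Fintype.sum_equiv (Equiv.mulLeft a⁻¹) _ _ fun g => ?_
    rw [Equiv.coe_mulLeft, ← gact_mul, ← gact_mul, mul_inv_cancel_left, mul_inv_rev, inv_inv]
  refine Module.Projective.of_split (mkLin H hHg) F (LinearMap.ext fun x => ?_)
  change F (H x) = x
  rw [hH, map_sum]
  conv_rhs => rw [← h x]
  refine Finset.sum_congr rfl fun g _ => ?_
  rw [gact_apply, map_smul, hs]; rfl

/-- An equivariant decomposition indexed by a `G`-set. -/
structure Gr (G : Type) [Group G] (Ω : Type) [Fintype Ω] [MulAction G Ω]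
    (X : Type) [AddCommGroup X] [Module (GA G) X] where
  p : Ω → X →+ X
  sum : ∀ x, ∑ ω, p ω x = x
  equiv : ∀ (g : G) ω x, gact X g (p ω x) = p (g • ω) (gact X g x)

section perm
variable {Ω Ω' : Type} [Fintype Ω] [DecidableEq Ω] [MulAction G Ω]
  [Fintype Ω'] [DecidableEq Ω'] [MulAction G Ω']

/-- Permutation matrices. -/
def permRep (G Ω : Type) [Group G] [Fintype Ω] [DecidableEq Ω] [MulAction G Ω] :
    G →* Matrix Ω Ω (ZMod 2) where
  toFun g := Matrix.of fun i j => if i = g • j then 1 else 0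
  map_one' := by ext i j; simp [Matrix.one_apply]
  map_mul' g h := by ext i j; simp [Matrix.mul_apply, mul_smul]

theorem perm_gact (g : G) (f : Tw (permRep G Ω) X) (i : Ω) :
    e _ X (gact _ g f) i = gact X g (e _ X f (g⁻¹ • i)) := by
  rw [Tw_gact, act_apply, Finset.sum_eq_single (g⁻¹ • i)]
  · simp only [K, permRep, MonoidHom.coe_mk, OneHom.coe_mk, Matrix.map_apply, Matrix.of_apply,
      smul_inv_smul, if_true, map_one, one_smul]
  · intro j _ hj
    have : i ≠ g • j := fun h => hj (by rw [h, inv_smul_smul])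
    simp only [K, permRep, MonoidHom.coe_mk, OneHom.coe_mk, Matrix.map_apply, Matrix.of_apply,
      if_neg this, map_zero, zero_smul]
  · simp

theorem gr_aux (g : G) (ω i : Ω) : g⁻¹ • i = ω ↔ i = g • ω := inv_smul_eq_iff

/-- Tensoring a graded module with a permutation module. -/
def grPerm (D : Gr G Ω' X) : Gr G (Ω × Ω') (Tw (permRep G Ω) X) where
  p ω := (e _ X).symm.toAddMonoidHom.comp <|
    (AddMonoidHom.pi fun i => if i = ω.1 then (D.p ω.2).comp (Pi.evalAddMonoidHom _ i) else 0).comp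
      (e _ X).toAddMonoidHom
  sum x := (e _ X).injective <| by
    rw [map_sum, Fintype.sum_prod_type]
    ext i
    simp only [Finset.sum_apply]
    change ∑ ω, ∑ ω', (if i = ω then (D.p ω').comp (Pi.evalAddMonoidHom _ i) else 0)
      (e _ X x) = _
    rw [Finset.sum_eq_single i]
    · simp [D.sum]
    · intro j _ hj
      simp [Ne.symm hj]
    · simp
  equiv g ω x := (e _ X).injective <| by
    ext i
    rw [perm_gact]
    change gact X g ((if g⁻¹ • i = ω.1 then (D.p ω.2).comp (Pi.evalAddMonoidHom _ (g⁻¹ • i)) else 0)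
      (e _ X x)) = (if i = g • ω.1 then (D.p (g • ω.2)).comp (Pi.evalAddMonoidHom _ i) else 0)
      (e _ X (gact _ g x))
    by_cases h : i = g • ω.1
    · rw [if_pos h, if_pos ((gr_aux _ _ _).2 h)]
      simp [D.equiv, perm_gact]
    · rw [if_neg h, if_neg (fun h' => h ((gr_aux _ _ _).1 h'))]
      simp

/-- The permutation grading. -/
def grPerm₁ (X : Type) [AddCommGroup X] [Module (GA G) X] : Gr G Ω (Tw (permRep G Ω) X) where
  p ω := (e _ X).symm.toAddMonoidHom.comp <|
    (AddMonoidHom.pi fun i => if i = ω then (Pi.evalAddMonoidHom _ i) else 0).comp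
      (e _ X).toAddMonoidHom
  sum x := (e _ X).injective <| by
    rw [map_sum]
    ext i
    simp only [Finset.sum_apply]
    change ∑ ω, (if i = ω then (Pi.evalAddMonoidHom _ i) else 0) (e _ X x) = _
    rw [Finset.sum_eq_single i]
    · simp
    · intro j _ hj
      simp [Ne.symm hj]
    · simp
  equiv g ω x := (e _ X).injective <| by
    ext i
    rw [perm_gact]
    change gact X g ((if g⁻¹ • i = ω then (Pi.evalAddMonoidHom _ (g⁻¹ • i)) else 0)
      (e _ X x)) = (if i = g • ω then (Pi.evalAddMonoidHom _ i) else 0) (e _ X (gact _ g x))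
    by_cases h : i = g • ω
    · rw [if_pos h, if_pos ((gr_aux _ _ _).2 h)]
      simp [perm_gact]
    · rw [if_neg h, if_neg (fun h' => h ((gr_aux _ _ _).1 h'))]
      simp

theorem act_K_sum {ι : Type} (s : Finset ι) (A : ι → Matrix m n (ZMod 2)) (f : n → X) :
    act X (K G (∑ i ∈ s, A i)) f = ∑ i ∈ s, act X (K G (A i)) f := by
  classical
  induction s using Finset.induction_on with
  | empty => simp [K_zero, act_zero]
  | insert a s ha ih => rw [Finset.sum_insert ha, Finset.sum_insert ha, K_add, act_add, ih]

theorem proj_of_gr [Fintype G] (D : Gr G Ω X) (ρ : G →* Matrix n n (ZMod 2))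
    (φ : Matrix n n (ZMod 2)) (ω₀ : Ω)
    (h : ∀ ω : Ω, ∑ g : G with g • ω₀ = ω, ρ g * φ * ρ g⁻¹ = 1) :
    Module.Projective (GA G) (Tw ρ X) := by
  let ψ : Tw ρ X →+ Tw ρ X := (e ρ X).symm.toAddMonoidHom.comp
    ((act X (K G φ)).comp ((e ρ X).toAddMonoidHom.comp (pw ρ (D.p ω₀))))
  have hψ : ∀ x, e ρ X (ψ x) = act X (K G φ) (fun j => D.p ω₀ (e ρ X x j)) := fun _ => rfl
  refine projective_of_avg (G := G) ψ fun x => (e ρ X).injective ?_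
  have key : ∀ g : G, e ρ X (gact _ g (ψ (gact _ g⁻¹ x))) =
      act X (K G (ρ g * φ * ρ g⁻¹)) (fun j => D.p (g • ω₀) (e ρ X x j)) := by
    intro g
    rw [Tw_gact, hψ, Tw_gact, ← act_K_map (gact X g), ← act_mul, ← K_mul,
      K_mul (ρ g * φ), act_mul]
    congr 1
    rw [act_K_map]
    ext j
    rw [D.equiv, act_K_map (D.p (g • ω₀)), ← gact_mul, mul_inv_cancel, gact_one]
  rw [map_sum]
  simp only [key]
  rw [← Finset.sum_fiberwise Finset.univ (fun g : G => g • ω₀)]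
  have : ∀ ω : Ω, ∑ g : G with g • ω₀ = ω,
      act X (K G (ρ g * φ * ρ g⁻¹)) (fun j => D.p (g • ω₀) (e ρ X x j)) =
      fun j => D.p ω (e ρ X x j) := by
    intro ω
    rw [Finset.sum_congr rfl (g := fun g => act X (K G (ρ g * φ * ρ g⁻¹))
      (fun j => D.p ω (e ρ X x j))), ← act_K_sum, h, K_one, act_one]
    intro g hg
    rw [(Finset.mem_filter.1 hg).2]
  simp only [this]
  ext j
  rw [Finset.sum_apply, D.sum]

end perm

end Tw

noncomputable section concrete

/-- The symmetric group on four letters. -/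
abbrev S4 := Equiv.Perm (Fin 4)

/-- The two-point set on which the group acts through the sign. -/
def Sg : Type := ℤˣ
instance : Fintype Sg := inferInstanceAs (Fintype ℤˣ)
instance : DecidableEq Sg := inferInstanceAs (DecidableEq ℤˣ)
instance : MulAction S4 Sg := MulAction.compHom ℤˣ (Equiv.Perm.sign : S4 →* ℤˣ)

/-- Two-element subsets. -/
def E2 : Type := {s : Finset (Fin 4) // s.card = 2}
instance : Fintype E2 := inferInstanceAs (Fintype {s : Finset (Fin 4) // s.card = 2})
instance : DecidableEq E2 := inferInstanceAs (DecidableEq {s : Finset (Fin 4) // s.card = 2})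
instance : MulAction S4 E2 where
  smul g s := ⟨s.1.map g.toEmbedding, by rw [Finset.card_map]; exact s.2⟩
  one_smul s := Subtype.ext (by change s.1.map _ = s.1; exact Finset.map_refl)
  mul_smul g h s := Subtype.ext (by
    change s.1.map _ = (s.1.map _).map _
    rw [Finset.map_map]; rfl)

/-- Coordinates of the twelve vectors `v i j`. -/
def vA (i j : Fin 4) : Fin 4 → ZMod 2 :=
  (![![![0, 0, 0, 0], ![1, 0, 0, 0], ![0, 0, 1, 0], ![1, 0, 1, 0]],
    ![![0, 1, 0, 0], ![0, 0, 0, 0], ![1, 1, 0, 1], ![1, 0, 0, 1]],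
    ![![1, 1, 1, 0], ![0, 0, 0, 1], ![0, 0, 0, 0], ![1, 1, 1, 1]],
    ![![0, 1, 1, 0], ![0, 1, 0, 1], ![0, 0, 1, 1], ![0, 0, 0, 0]]] : Fin 4 → Fin 4 → Fin 4 → ZMod 2)
    i j

/-- The four basis pairs. -/
def bp : Fin 4 → Fin 4 × Fin 4 := ![(0, 1), (1, 0), (0, 2), (2, 1)]

/-- Matrices of the four-dimensional representation. -/
def mA (g : S4) : Matrix (Fin 4) (Fin 4) (ZMod 2) :=
  Matrix.of fun i s => vA (g (bp s).1) (g (bp s).2) i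

theorem mA_vA : ∀ (g : S4) (i j : Fin 4), i ≠ j → (mA g).mulVec (vA i j) = vA (g i) (g j) := by
  decide +kernel

theorem bp_ne : ∀ s, (bp s).1 ≠ (bp s).2 := by decide

/-- The four-dimensional representation. -/
def rA : S4 →* Matrix (Fin 4) (Fin 4) (ZMod 2) where
  toFun := mA
  map_one' := by decide +kernel
  map_mul' g h := by
    ext i s
    have := congrFun (mA_vA g (h (bp s).1) (h (bp s).2) (h.injective.ne (bp_ne s))) i
    exact this.symm

abbrev rC := permRep S4 Sg
abbrev r0 := permRep S4 (Fin 4)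
abbrev r1 := permRep S4 E2

/-- All-ones column. -/
def one1 (n : Type) : Matrix n Unit (ZMod 2) := Matrix.of fun _ _ => 1
/-- All-ones row. -/
def one2 (n : Type) : Matrix Unit n (ZMod 2) := Matrix.of fun _ _ => 1

theorem one1_inv {G Ω : Type} [Group G] [Fintype Ω] [DecidableEq Ω] [MulAction G Ω] (g : G) :
    permRep G Ω g * one1 Ω = one1 Ω := by
  ext i j
  simp only [permRep, one1, MonoidHom.coe_mk, OneHom.coe_mk, Matrix.mul_apply, Matrix.of_apply,
    mul_one]
  rw [Finset.sum_eq_single (g⁻¹ • i)]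
  · simp
  · intro b _ hb
    exact if_neg fun h => hb (by rw [h, inv_smul_smul])
  · simp

theorem one2_inv {G Ω : Type} [Group G] [Fintype Ω] [DecidableEq Ω] [MulAction G Ω] (g : G) :
    one2 Ω * permRep G Ω g = one2 Ω := by
  ext i j
  simp [permRep, one2, Matrix.mul_apply]

/-- Boundary of faces (indexed by the opposite vertex). -/
def D2 : Matrix E2 (Fin 4) (ZMod 2) := Matrix.of fun s l => if l ∈ s.1 then 0 else 1
/-- Boundary of edges. -/
def D1 : Matrix (Fin 4) E2 (ZMod 2) := Matrix.of fun i s => if i ∈ s.1 then 1 else 0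

theorem D2_eq : ∀ g, r1 g * D2 = D2 * r0 g := by decide +kernel
theorem D1_eq : ∀ g, r0 g * D1 = D1 * r1 g := by decide +kernel

/-- Cone homotopies. -/
def H0 : Matrix E2 (Fin 4) (ZMod 2) :=
  Matrix.of fun s i => if i ≠ 0 ∧ 0 ∈ s.1 ∧ i ∈ s.1 then 1 else 0
/-- Cone homotopy. -/
def H1 : Matrix (Fin 4) E2 (ZMod 2) :=
  Matrix.of fun l s => if 0 ∉ s.1 ∧ l ∉ s.1 ∧ l ≠ 0 then 1 else 0
/-- Cone homotopy. -/
def H2 : Matrix Unit (Fin 4) (ZMod 2) := Matrix.of fun _ l => if l = 0 then 1 else 0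
/-- Cone homotopy. -/
def Hm : Matrix (Fin 4) Unit (ZMod 2) := Matrix.of fun l _ => if l = 0 then 1 else 0

theorem c1 : D2 * one1 (Fin 4) = 0 := by decide +kernel
theorem c2 : D1 * D2 = 0 := by decide +kernel
theorem c3 : one2 (Fin 4) * D1 = 0 := by decide +kernel
theorem c4 : H2 * one1 (Fin 4) = 1 := by decide +kernel
theorem c5 : one1 (Fin 4) * H2 + H1 * D2 = 1 := by decide +kernel
theorem c6 : D2 * H1 + H0 * D1 = 1 := by decide +kernel
theorem c7 : D1 * H0 + Hm * one2 (Fin 4) = 1 := by decide +kernel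
theorem c8 : one2 (Fin 4) * Hm = 1 := by decide +kernel

/-- Base point. -/
def w0 : Sg := (1 : ℤˣ)
/-- Splittings for the sign extension. -/
def Q2 : Matrix Unit Sg (ZMod 2) := Matrix.of fun _ l => if l = w0 then 1 else 0
/-- Splittings for the sign extension. -/
def Qm : Matrix Sg Unit (ZMod 2) := Matrix.of fun l _ => if l = w0 then 0 else 1
theorem q1 : one2 Sg * one1 Sg = 0 := by decide +kernel
theorem q2 : Q2 * one1 Sg = 1 := by decide +kernel
theorem q3 : one1 Sg * Q2 + Qm * one2 Sg = 1 := by decide +kernel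
theorem q4 : one2 Sg * Qm = 1 := by decide +kernel

/-- Invariant vector. -/
def zA : Matrix (Fin 4) Unit (ZMod 2) := Matrix.of fun i _ => (![1, 1, 0, 0] : Fin 4 → ZMod 2) i
/-- The middle map of the two-extension. -/
def al : Matrix (Fin 4) (Fin 4) (ZMod 2) :=
  !![0, 0, 0, 1; 0, 0, 1, 0; 1, 1, 0, 0; 1, 1, 1, 1]
/-- Splitting. -/
def sA : Matrix Unit (Fin 4) (ZMod 2) := Matrix.of fun _ i => (![0, 1, 0, 0] : Fin 4 → ZMod 2) i
/-- Splitting. -/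
def uA : Matrix (Fin 4) (Fin 4) (ZMod 2) :=
  !![0, 0, 1, 0; 0, 0, 0, 0; 0, 1, 0, 0; 0, 1, 1, 1]
/-- Splitting. -/
def tA : Matrix (Fin 4) (Fin 4) (ZMod 2) :=
  !![0, 0, 0, 0; 0, 0, 1, 0; 0, 1, 0, 0; 0, 1, 1, 1]

theorem zA_inv : ∀ g, rA g * zA = zA := by decide +kernel
theorem al_eq : ∀ g, r0 g * al = al * rA g := by decide +kernel
theorem a1 : al * zA = 0 := by decide +kernel
theorem a2 : one2 (Fin 4) * al = 0 := by decide +kernel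
theorem a3 : sA * zA = 1 := by decide +kernel
theorem a4 : zA * sA + uA * al = 1 := by decide +kernel
theorem a5 : al * tA + Hm * one2 (Fin 4) = 1 := by decide +kernel

/-- Matrix for Higman's criterion. -/
def ph0 : Matrix (Fin 4) (Fin 4) (ZMod 2) := !![1, 0, 0, 0; 0, 0, 0, 0; 0, 0, 0, 0; 0, 0, 0, 0]
/-- Matrix for Higman's criterion. -/
def phA : Matrix (Fin 4) (Fin 4) (ZMod 2) := !![0, 0, 0, 0; 0, 1, 0, 0; 0, 0, 1, 0; 0, 0, 0, 0]
/-- Matrix for Higman's criterion. -/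
def phB : Matrix (Fin 4) (Fin 4) (ZMod 2) := !![0, 0, 0, 0; 0, 1, 0, 0; 0, 0, 0, 0; 0, 0, 0, 1]

/-- Base point. -/
def w1 : E2 × Sg := (⟨{0, 1}, by decide⟩, w0)

theorem hig0 : ∀ ω : Sg, ∑ g : S4 with g • w0 = ω, r0 g * ph0 * r0 g⁻¹ = 1 := by
  decide +kernel
theorem higA : ∀ ω : E2 × Sg, ∑ g : S4 with g • w1 = ω, rA g * phA * rA g⁻¹ = 1 := by
  decide +kernel
theorem higB : ∀ ω : E2 × Sg, ∑ g : S4 with g • w1 = ω, r0 g * phB * r0 g⁻¹ = 1 := by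
  decide +kernel

/-- The two-extension of functors. -/
def twoExt : TwoExt (T rA) (T r0) where
  η := { app := fun X => ModuleCat.ofHom (col zA zA_inv X)
         naturality := fun X Y f => by
          ext x
          apply (e rA Y).injective
          change act Y (K S4 zA) (fun _ => f.hom x) = fun j => f.hom (act X (K S4 zA) (fun _ => x) j)
          rw [act_map] }
  α := { app := fun X => ModuleCat.ofHom (chg al al_eq X)
         naturality := fun X Y f => by
          ext x
          apply (e r0 Y).injective
          change act Y (K S4 al) (fun j => f.hom (e rA X x j)) =
            fun j => f.hom (act X (K S4 al) (e rA X x) j)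
          rw [act_map] }
  ε := { app := fun X => ModuleCat.ofHom (row (one2 (Fin 4)) one2_inv X)
         naturality := fun X Y f => by
          ext x
          change act Y (K S4 (one2 (Fin 4))) (fun j => f.hom (e r0 X x j)) () =
            f.hom (act X (K S4 (one2 (Fin 4))) (e r0 X x) ())
          rw [act_map] }
  w X := by ext x; exact chg_col (hA := zA_inv) (hB := al_eq) a1 x
  w' X := by ext x; exact row_chg (hA := al_eq) (hB := one2_inv) a2 x
  mono X := (ModuleCat.mono_iff_injective _).2 (col_inj (hA := zA_inv) sA a3)
  epi X := (ModuleCat.epi_iff_surjective _).2 (row_surj (hB := one2_inv) Hm c8)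
  ex X := (ShortComplex.moduleCat_exact_iff _).2 (chg_col_ex (hA := zA_inv) (hB := al_eq) sA uA a4)
  ex' X := (ShortComplex.moduleCat_exact_iff _).2 (row_chg_ex (hA := al_eq) (hB := one2_inv) tA Hm a5)

theorem acyc {N : ModuleCat.{0} (GA S4)} (X : Type) [AddCommGroup X] [Module (GA S4) X]
    [Module.Projective (GA S4) X] : Acyclic.{0} N (ModuleCat.of (GA S4) X) :=
  haveI : Projective (ModuleCat.of (GA S4) X) :=
    (IsProjective.iff_projective X).1 inferInstance
  Acyclic.of_projective

theorem main_S4 (N M : ModuleCat.{0} (GA S4)) (hM : Sparse.{0} N M) : Acyclic.{0} N M := by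
  let X : ModuleCat.{0} (GA S4) := (T rC).obj M
  let P0 : ModuleCat.{0} (GA S4) := (T r0).obj X
  let P1 : ModuleCat.{0} (GA S4) := (T r1).obj X
  let i : M ⟶ X := ModuleCat.ofHom (col (one1 Sg) one1_inv M)
  let p : X ⟶ M := ModuleCat.ofHom (row (one2 Sg) one2_inv M)
  let η : X ⟶ P0 := ModuleCat.ofHom (col (one1 (Fin 4)) one1_inv X)
  let d₂ : P0 ⟶ P1 := ModuleCat.ofHom (chg D2 D2_eq X)
  let d₁ : P1 ⟶ P0 := ModuleCat.ofHom (chg D1 D1_eq X)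
  let ε : P0 ⟶ X := ModuleCat.ofHom (row (one2 (Fin 4)) one2_inv X)
  have wip : i ≫ p = 0 := by ext x; exact row_col (hA := one1_inv) (hB := one2_inv) q1 x
  have w₁ : η ≫ d₂ = 0 := by ext x; exact chg_col (hA := one1_inv) (hB := D2_eq) c1 x
  have w₂ : d₂ ≫ d₁ = 0 := by ext x; exact chg_chg (hA := D2_eq) (hB := D1_eq) c2 x
  have w₃ : d₁ ≫ ε = 0 := by ext x; exact row_chg (hA := D1_eq) (hB := one2_inv) c3 x
  have : Mono i := (ModuleCat.mono_iff_injective _).2 (col_inj (hA := one1_inv) Q2 q2)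
  have : Epi p := (ModuleCat.epi_iff_surjective _).2 (row_surj (hB := one2_inv) Qm q4)
  have : Mono η := (ModuleCat.mono_iff_injective _).2 (col_inj (hA := one1_inv) H2 c4)
  have : Epi ε := (ModuleCat.epi_iff_surjective _).2 (row_surj (hB := one2_inv) Hm c8)
  have hP0 : Module.Projective (GA S4) (Tw r0 X) :=
    proj_of_gr (grPerm₁ (Ω := Sg) M) r0 ph0 w0 hig0
  have gr1 : Gr S4 (E2 × Sg) P1 := grPerm (Ω := E2) (grPerm₁ (Ω := Sg) M)
  have hA : Module.Projective (GA S4) (Tw rA P1) := proj_of_gr gr1 rA phA w1 higA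
  have hB : Module.Projective (GA S4) (Tw r0 P1) := proj_of_gr gr1 r0 phB w1 higB
  exact main_abs twoExt i p wip
    { exact := (ShortComplex.moduleCat_exact_iff _).2 (row_col_ex (hA := one1_inv) (hB := one2_inv) Q2 Qm q3) }
    η d₂ d₁ ε w₁ w₂ w₃
    ((ShortComplex.moduleCat_exact_iff _).2 (chg_col_ex (hA := one1_inv) (hB := D2_eq) H2 H1 c5))
    ((ShortComplex.moduleCat_exact_iff _).2 (chg_chg_ex (hA := D2_eq) (hB := D1_eq) H1 H0 c6))
    ((ShortComplex.moduleCat_exact_iff _).2 (row_chg_ex (hA := D1_eq) (hB := one2_inv) H0 Hm c7))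
    (acyc _) (acyc _) (acyc _) (acyc _) hM

end concrete
end S4Ext

/-- Let `k = 𝔽₂` and `G = S₄` the symmetric group on four letters, and
let `M, N` be finitely generated left `kG`-modules.  If `Ext_{kG}^m(M,N) ≠ 0` for some
`m > 0`, then there are integers `t` with `0 ≤ t ≤ 5` and `m₀` such that
`Ext_{kG}^m(M,N) ≠ 0` for every `m ≥ m₀` with `m ≡ t (mod 6)`. -/
theorem stmt_14
    (M N : Type) [AddCommGroup M]
    [Module (MonoidAlgebra (ZMod 2) (Equiv.Perm (Fin 4))) M]
    [Module.Finite (MonoidAlgebra (ZMod 2) (Equiv.Perm (Fin 4))) M]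
    [AddCommGroup N] [Module (MonoidAlgebra (ZMod 2) (Equiv.Perm (Fin 4))) N]
    [Module.Finite (MonoidAlgebra (ZMod 2) (Equiv.Perm (Fin 4))) N]
    (hm : ∃ m : ℕ, 0 < m ∧ Nontrivial
      (((_root_.Ext (ZMod 2) (ModuleCat (MonoidAlgebra (ZMod 2) (Equiv.Perm (Fin 4)))) m).obj
        (Opposite.op (ModuleCat.of (MonoidAlgebra (ZMod 2) (Equiv.Perm (Fin 4))) M))).obj
        (ModuleCat.of (MonoidAlgebra (ZMod 2) (Equiv.Perm (Fin 4))) N))) :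
    ∃ t : ℕ, t ≤ 5 ∧ ∃ m₀ : ℕ, ∀ m ≥ m₀, m % 6 = t → Nontrivial
      (((_root_.Ext (ZMod 2) (ModuleCat (MonoidAlgebra (ZMod 2) (Equiv.Perm (Fin 4)))) m).obj
        (Opposite.op (ModuleCat.of (MonoidAlgebra (ZMod 2) (Equiv.Perm (Fin 4))) M))).obj
        (ModuleCat.of (MonoidAlgebra (ZMod 2) (Equiv.Perm (Fin 4))) N)) := by
  by_contra! hcon
  obtain ⟨m, hm0, hm⟩ := hm
  obtain ⟨m, rfl⟩ := Nat.exists_eq_succ_of_ne_zero hm0.ne'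
  refine not_subsingleton_iff_nontrivial.2 hm ((S4Ext.subsingleton_iff _ _ m).2
    (S4Ext.main_S4 _ _ ?_ (m + 1) (Nat.succ_pos m)))
  intro d hd
  obtain ⟨m', hm', h6, hs⟩ := hcon (d % 6) (by omega) d
  obtain ⟨j, rfl⟩ : ∃ j, m' = d + 6 * j := ⟨(m' - d) / 6, by omega⟩
  refine ⟨j, ?_⟩
  obtain ⟨d, rfl⟩ := Nat.exists_eq_succ_of_ne_zero (Nat.pos_iff_ne_zero.1 hd)
  have e1 : d.succ + 6 * j = (d + 6 * j) + 1 := by omega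
  rw [e1] at hs ⊢
  exact (S4Ext.subsingleton_iff _ _ _).1 hs
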